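/- arXiv:2402.15136 — 8 statements merged into one kernel-verified Lean document; each statement's English description precedes it below -/
import Mathlib

section
/- Let P be a property of schemes. Assume P is local in the following sense: for every scheme X, every n ≥ 1 and every family of open subschemes U₁, …, Uₙ of X with U₁ ∪ ⋯ ∪ Uₙ = X, if for every nonempty subset S ⊆ {1, …, n} the open subscheme ⋂_{i ∈ S} Uᵢ (regarded as a scheme) satisfies P, then X satisfies P. If every affine scheme satisfies P, then every scheme whose underlying topological space is quasi-compact and quasi-separated satisfies P. -/
/-!
A nonempty finite intersection of affine opens of a scheme `X` is affine if `X` has affine diagonal,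
and it is still quasi-affine if `X` is merely quasi-separated, being a quasi-compact open of an
affine scheme. As quasi-affine schemes have affine diagonal, applying locality to finite affine
covers twice passes from affine schemes to quasi-affine ones, and from these to all qcqs schemes.
-/

open AlgebraicGeometry CategoryTheory

universe u

variable {X : Scheme.{u}}

theorem exists_fin_succ_affineOpens_iSup_eq_top (X : Scheme.{u}) [CompactSpace X] :
    ∃ (n : ℕ) (U : Fin (n + 1) → X.affineOpens), ⨆ i, (U i : X.Opens) = ⊤ := by
  obtain ⟨s, hs, hsup⟩ := isCompact_iff_finite_and_eq_biUnion_affineOpens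
    (U := (⊤ : X.Opens)) |>.mp isCompact_univ
  obtain ⟨n, V, -, rfl⟩ := hs.fin_param
  -- Adding the empty open keeps the family nonempty when `X` is empty.
  refine ⟨n, Fin.cons ⟨⊥, isAffineOpen_bot X⟩ V, top_le_iff.mp ?_⟩
  rw [hsup, iSup_range]
  exact iSup_le fun i ↦ le_iSup_of_le i.succ le_rfl

theorem isQuasiAffine_inf [QuasiSeparatedSpace X] {U V : X.Opens}
    (hU : U.toScheme.IsQuasiAffine) (hV : IsCompact (V : Set X)) :
    (U ⊓ V).toScheme.IsQuasiAffine := by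
  have hUV : IsCompact ((U ⊓ V : X.Opens) : Set X) :=
    (isCompact_iff_compactSpace.mpr hU.toCompactSpace).inter_of_isOpen hV U.isOpen V.isOpen
  have : CompactSpace (U ⊓ V : X.Opens) := isCompact_iff_compactSpace.mp hUV
  exact .of_isImmersion (X.homOfLE (inf_le_left : U ⊓ V ≤ U))

theorem isQuasiAffine_biInf [QuasiSeparatedSpace X] {ι : Type*} {s : Set ι} (hs : s.Finite)
    (hs' : s.Nonempty) {U : ι → X.Opens} (hU : ∀ i ∈ s, (U i).toScheme.IsQuasiAffine) :
    (⨅ i ∈ s, U i).toScheme.IsQuasiAffine :=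
  InfClosed.biInf_mem_of_nonempty (s := {V : X.Opens | V.toScheme.IsQuasiAffine})
    (fun _ hV _ hW ↦ isQuasiAffine_inf hV (isCompact_iff_compactSpace.mpr hW.toCompactSpace))
    hs hs' hU

/-- Locality of a property of schemes with respect to finite open covers: it descends to `X` from
the nonempty intersections of the members of a nonempty finite open cover of `X`. Invariance of `P`
under isomorphism is not part of the notion. -/
def IsLocalForFiniteOpenCovers (P : Scheme.{u} → Prop) : Prop :=
  ∀ (X : Scheme.{u}) (n : ℕ), 1 ≤ n → ∀ U : Fin n → X.Opens, (⨆ i, U i) = ⊤ →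
    (∀ S : Finset (Fin n), S.Nonempty → P (⨅ i ∈ S, U i : X.Opens).toScheme) → P X

namespace IsLocalForFiniteOpenCovers

variable {P : Scheme.{u} → Prop}

theorem of_affineOpens (hP : IsLocalForFiniteOpenCovers P) [CompactSpace X]
    (h : ∀ {n : ℕ} (U : Fin n → X.affineOpens) (S : Finset (Fin n)), S.Nonempty →
      P (⨅ i ∈ S, (U i : X.Opens)).toScheme) : P X := by
  obtain ⟨n, U, hU⟩ := exists_fin_succ_affineOpens_iSup_eq_top X
  exact hP X (n + 1) n.succ_pos (fun i ↦ U i) hU (h U)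

theorem of_isAffineHom_diagonal (hP : IsLocalForFiniteOpenCovers P)
    (haffine : ∀ X : Scheme.{u}, IsAffine X → P X) [CompactSpace X]
    [IsAffineHom (Limits.pullback.diagonal (Limits.terminal.from X))] : P X :=
  hP.of_affineOpens fun U S hS ↦
    haffine _ (IsAffineOpen.biInf _ S.finite_toSet hS fun i _ ↦ (U i).2)

theorem of_quasiSeparatedSpace (hP : IsLocalForFiniteOpenCovers P)
    (hquasiAffine : ∀ X : Scheme.{u}, X.IsQuasiAffine → P X) [CompactSpace X]
    [QuasiSeparatedSpace X] : P X :=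
  hP.of_affineOpens fun U S hS ↦ hquasiAffine _ <|
    isQuasiAffine_biInf S.finite_toSet hS fun i _ ↦
      have : IsAffine (U i : X.Opens) := (U i).2
      inferInstance

end IsLocalForFiniteOpenCovers

/-- Let `P` be a property of schemes which is local in the sense that
for every scheme `X`, every `n ≥ 1` and every family of open subschemes `U₁, …, Uₙ` of `X`
covering `X`, if for every nonempty subset `S ⊆ {1, …, n}` the open subscheme
`⋂_{i ∈ S} Uᵢ` (regarded as a scheme) satisfies `P`, then `X` satisfies `P`.
If every affine scheme satisfies `P`, then every scheme whose underlying topological space is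
quasi-compact and quasi-separated satisfies `P`. -/
theorem local_property_of_affine_qcqs (P : Scheme.{u} → Prop)
    (hlocal : ∀ (X : Scheme.{u}) (n : ℕ), 1 ≤ n → ∀ U : Fin n → X.Opens,
      (⨆ i, U i) = ⊤ →
      (∀ S : Finset (Fin n), S.Nonempty → P (⨅ i ∈ S, U i : X.Opens).toScheme) → P X)
    (haffine : ∀ X : Scheme.{u}, IsAffine X → P X)
    (X : Scheme.{u}) (hqc : CompactSpace X) (hqs : QuasiSeparatedSpace X) :
    P X := by
  have hP : IsLocalForFiniteOpenCovers P := hlocal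
  have hquasiAffine (Y : Scheme.{u}) (_ : Y.IsQuasiAffine) : P Y :=
    hP.of_isAffineHom_diagonal haffine
  exact hP.of_quasiSeparatedSpace hquasiAffine
end

section
/- Let X be a qcqs scheme and let E be a sieve on X in the category of schemes. The following are equivalent: (1) E is a covering sieve for the Zariski topology, i.e. the Grothendieck topology on the category of schemes generated by jointly surjective families of open immersions; (2) E contains a finite collection of open immersions {Uᵢ ⟶ X}_{i=1,…,n} such that the induced morphism ⨿ᵢ Uᵢ ⟶ X from the disjoint union is a Zariski epi; (3) E contains a finite collection of morphisms {Zᵢ ⟶ X}_{i=1,…,n} from qcqs schemes such that the induced morphism ⨿ᵢ Zᵢ ⟶ X from the disjoint union is a Zariski epi. -/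
open AlgebraicGeometry CategoryTheory CategoryTheory.Limits

universe u

/-- A morphism `p : V ⟶ X` of schemes is a *Zariski epi* if `p` is étale and there exist
finitely many open subschemes `U₁, …, Uₙ` of `X` with `U₁ ∪ ⋯ ∪ Uₙ = X` such that for each
`i` the open immersion `Uᵢ ⟶ X` factors through `p`. -/
def IsZariskiEpi {V X : Scheme.{u}} (p : V ⟶ X) : Prop :=
  IsEtale p ∧
    ∃ (n : ℕ) (U : Fin n → X.Opens), (⨆ i, U i) = ⊤ ∧
      ∀ i, ∃ s : (U i).toScheme ⟶ V, s ≫ p = (U i).ι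

/-!
A Zariski epi is locally split, so a sieve whose pullback along it is covering is itself covering;
and the pullback of `E` along `⨿ᵢ Zᵢ ⟶ X` is covering because it contains the inclusions of the
`Zᵢ`. Conversely, the members of a covering sieve which are inclusions of affine opens cover `X`,
and by quasi-compactness finitely many of them suffice. Affine schemes are qcqs.
-/

universe v

lemma covering_of_pullback_of_locally_split {C : Type*} [Category* C] (J : GrothendieckTopology C)
    {V X : C} {p : V ⟶ X} {ι : Type*} {W : ι → C} {f : ∀ i, W i ⟶ X}
    (hf : Sieve.ofArrows W f ∈ J X) (hsplit : ∀ i, ∃ s : W i ⟶ V, s ≫ p = f i)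
    {E : Sieve X} (hE : E.pullback p ∈ J V) : E ∈ J X := by
  refine J.transitive hf E fun Y h hh => ?_
  obtain ⟨i, t, rfl⟩ := (Sieve.mem_ofArrows_iff _ _ _).mp hh
  obtain ⟨s, hs⟩ := hsplit i
  rw [← hs, ← Category.assoc, Sieve.pullback_comp]
  exact J.pullback_stable (t ≫ s) hE

section Sieve

variable {X : Scheme.{u}} {E : Sieve X}

lemma sieve_opens_ι_of_le {U V : X.Opens} (h : U ≤ V) (hV : E V.ι) : E U.ι :=
  X.homOfLE_ι h ▸ E.downward_closed hV (X.homOfLE h)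

lemma exists_isAffineOpen_of_mem_zariskiTopology (hE : E ∈ Scheme.zariskiTopology X) (x : X) :
    ∃ U : X.Opens, IsAffineOpen U ∧ x ∈ U ∧ E U.ι := by
  obtain ⟨𝒰, h𝒰⟩ := Scheme.exists_cover_of_mem_grothendieckTopology hE
  obtain ⟨i, y, rfl⟩ := 𝒰.exists_eq x
  have : IsOpenImmersion (𝒰.f i) := 𝒰.map_prop i
  have mem_range : E (𝒰.f i).opensRange.ι :=
    (𝒰.f i).isoOpensRange_inv_comp ▸ E.downward_closed (h𝒰 _ _ ⟨i⟩) _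
  obtain ⟨U, hU, hyU, hUle⟩ := exists_isAffineOpen_mem_and_subset
    (U := (𝒰.f i).opensRange) (x := 𝒰.f i y) ⟨y, rfl⟩
  exact ⟨U, hU, hyU, sieve_opens_ι_of_le hUle mem_range⟩

lemma exists_finite_affineOpens_of_mem_zariskiTopology [CompactSpace X]
    (hE : E ∈ Scheme.zariskiTopology X) :
    ∃ (n : ℕ) (U : Fin n → X.affineOpens), (⨆ i, (U i : X.Opens)) = ⊤ ∧
      ∀ i, E (U i : X.Opens).ι := by
  choose U hU hxU hEU using exists_isAffineOpen_of_mem_zariskiTopology hE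
  obtain ⟨t, ht⟩ := CompactSpace.elim_nhds_subcover (fun x => (U x : Set X))
    fun x => (U x).isOpen.mem_nhds (hxU x)
  refine ⟨t.card, fun i => ⟨U (t.equivFin.symm i), hU _⟩, ?_, fun i => hEU _⟩
  rw [t.equivFin.symm.iSup_comp (g := fun x : t => U x)]
  exact TopologicalSpace.Opens.ext (by simpa [Set.iUnion_subtype] using ht)

lemma pullback_sigmaDesc_mem_zariskiTopology {ι : Type v} [Small.{u} ι] {Z : ι → Scheme.{u}}
    {g : ∀ i, Z i ⟶ X} (hg : ∀ i, E (g i)) :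
    E.pullback (Sigma.desc g) ∈ Scheme.zariskiTopology (∐ Z) := by
  have sigma_mem : Sieve.ofArrows Z (Sigma.ι Z) ∈ Scheme.zariskiTopology (∐ Z) :=
    (sigmaOpenCover Z).mem_grothendieckTopology
  refine GrothendieckTopology.superset_covering _ ?_ sigma_mem
  rw [Sieve.ofArrows, Sieve.generate_le_iff, Presieve.ofArrows_le_iff]
  intro i
  simpa only [Sieve.pullback_apply, Sigma.ι_desc] using hg i

end Sieve

-- Instance search does not apply `HasRingHomProperty.instIsZariskiLocalAtSource` to `Etale`.
instance etale_isZariskiLocalAtSource : IsZariskiLocalAtSource @Etale.{u} :=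
  HasRingHomProperty.instIsZariskiLocalAtSource

namespace IsZariskiEpi

lemma sigmaDesc_of_isOpenImmersion {X : Scheme.{u}} {ι : Type v} [Finite ι] {Z : ι → Scheme.{u}}
    (g : ∀ i, Z i ⟶ X) [∀ i, IsOpenImmersion (g i)] (hg : (⨆ i, (g i).opensRange) = ⊤) :
    IsZariskiEpi (Sigma.desc g) := by
  obtain ⟨n, ⟨e⟩⟩ := Finite.exists_equiv_fin ι
  have etale_desc : Etale (Sigma.desc g) := IsZariskiLocalAtSource.sigmaDesc fun _ => inferInstance
  refine ⟨etale_desc, n, fun i => (g (e.symm i)).opensRange, ?_,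
    fun i => ⟨(g (e.symm i)).isoOpensRange.inv ≫ Sigma.ι Z _, by simp⟩⟩
  rw [e.symm.iSup_comp (g := fun i => (g i).opensRange), hg]

lemma mem_zariskiTopology_of_pullback {V X : Scheme.{u}} {p : V ⟶ X} (hp : IsZariskiEpi p)
    {E : Sieve X} (hE : E.pullback p ∈ Scheme.zariskiTopology V) :
    E ∈ Scheme.zariskiTopology X := by
  obtain ⟨-, n, U, hU, hsplit⟩ := hp
  exact covering_of_pullback_of_locally_split _
    (X.openCoverOfIsOpenCover U (.mk hU)).mem_grothendieckTopology hsplit hE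

end IsZariskiEpi

theorem zariskiTopology_mem_tfae_general (X : Scheme.{u}) [CompactSpace X] (E : Sieve X) :
    List.TFAE
      [E ∈ Scheme.zariskiTopology X,
        ∃ (n : ℕ) (Z : Fin n → Scheme.{u}) (g : ∀ i, Z i ⟶ X),
          (∀ i, IsOpenImmersion (g i)) ∧ (∀ i, E.arrows (g i)) ∧
            IsZariskiEpi (Sigma.desc g),
        ∃ (n : ℕ) (Z : Fin n → Scheme.{u}) (g : ∀ i, Z i ⟶ X),
          (∀ i, CompactSpace (Z i) ∧ QuasiSeparatedSpace (Z i)) ∧ (∀ i, E.arrows (g i)) ∧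
            IsZariskiEpi (Sigma.desc g)] := by
  have cover {n : ℕ} {Z : Fin n → Scheme.{u}} {g : ∀ i, Z i ⟶ X} (hE : ∀ i, E (g i))
      (hg : IsZariskiEpi (Sigma.desc g)) : E ∈ Scheme.zariskiTopology X :=
    hg.mem_zariskiTopology_of_pullback (pullback_sigmaDesc_mem_zariskiTopology hE)
  have affine (hE : E ∈ Scheme.zariskiTopology X) : ∃ (n : ℕ) (U : Fin n → X.affineOpens),
      (∀ i, E (U i : X.Opens).ι) ∧ IsZariskiEpi (Sigma.desc fun i => (U i : X.Opens).ι) := by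
    obtain ⟨n, U, hU, hEU⟩ := exists_finite_affineOpens_of_mem_zariskiTopology hE
    exact ⟨n, U, hEU, .sigmaDesc_of_isOpenImmersion _ (by simpa using hU)⟩
  tfae_have 1 → 2 := fun hE =>
    have ⟨n, _, hEU, hU⟩ := affine hE
    ⟨n, _, _, fun _ => inferInstance, hEU, hU⟩
  tfae_have 1 → 3 := fun hE =>
    have ⟨n, U, hEU, hU⟩ := affine hE
    have (i : Fin n) : IsAffine (U i : X.Opens) := (U i).2
    ⟨n, _, _, fun _ => ⟨inferInstance, inferInstance⟩, hEU, hU⟩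
  tfae_have 2 → 1 := fun ⟨_, _, _, _, hE, hg⟩ => cover hE hg
  tfae_have 3 → 1 := fun ⟨_, _, _, _, hE, hg⟩ => cover hE hg
  tfae_finish

/-- For a sieve `E` on a qcqs scheme `X` the following are equivalent:
(1) `E` is a covering sieve for the Zariski topology (the Grothendieck topology generated by
jointly surjective families of open immersions); (2) `E` contains a finite collection of open
immersions `{Uᵢ ⟶ X}` such that the induced morphism `⨿ᵢ Uᵢ ⟶ X` is a Zariski epi;
(3) `E` contains a finite collection of morphisms `{Zᵢ ⟶ X}` from qcqs schemes such that the
induced morphism `⨿ᵢ Zᵢ ⟶ X` is a Zariski epi. -/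
theorem zariskiTopology_mem_tfae (X : Scheme.{u}) [CompactSpace X] [QuasiSeparatedSpace X]
    (E : Sieve X) :
    List.TFAE
      [E ∈ Scheme.zariskiTopology X,
        ∃ (n : ℕ) (Z : Fin n → Scheme.{u}) (g : ∀ i, Z i ⟶ X),
          (∀ i, IsOpenImmersion (g i)) ∧ (∀ i, E.arrows (g i)) ∧
            IsZariskiEpi (Sigma.desc g),
        ∃ (n : ℕ) (Z : Fin n → Scheme.{u}) (g : ∀ i, Z i ⟶ X),
          (∀ i, CompactSpace (Z i) ∧ QuasiSeparatedSpace (Z i)) ∧ (∀ i, E.arrows (g i)) ∧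
            IsZariskiEpi (Sigma.desc g)] := by
  exact zariskiTopology_mem_tfae_general X E
end

section
/- Let X be a qcqs scheme and let V₁, …, Vₘ ⟶ X be finitely many étale morphisms such that the induced morphism V₁ ⨿ ⋯ ⨿ Vₘ ⟶ X from the disjoint union is a Nisnevich epi. Then the family {Vⱼ ⟶ X}_{j=1,…,m} is a Nisnevich covering: there exists a finite chain of open subschemes ∅ = U₀ ⊆ U₁ ⊆ ⋯ ⊆ Uₙ = X such that for each i = 1, …, n there is a single index j(i) with the property that every morphism g : T ⟶ X from a reduced scheme T whose set-theoretic image is contained in Uᵢ \ Uᵢ₋₁ factors through V_{j(i)} ⟶ X. -/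
open AlgebraicGeometry CategoryTheory CategoryTheory.Limits

universe u

/-- A morphism `p : V ⟶ X` of schemes is a *Nisnevich epi* if `p` is étale and there exists a
finite chain of open subschemes `∅ = U₀ ⊆ U₁ ⊆ ⋯ ⊆ Uₙ = X` such that for every `i = 1, …, n`,
every morphism `g : T ⟶ X` from a reduced scheme `T` whose set-theoretic image is contained in
`Uᵢ \ Uᵢ₋₁` factors through `p`. -/
def IsNisnevichEpi {V X : Scheme.{u}} (p : V ⟶ X) : Prop :=
  IsEtale p ∧
    ∃ (n : ℕ) (U : Fin (n + 1) → X.Opens), Monotone U ∧ U 0 = ⊥ ∧ U (Fin.last n) = ⊤ ∧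
      ∀ i : Fin n, ∀ (T : Scheme.{u}) [IsReduced T] (g : T ⟶ X),
        Set.range g.base ⊆ (U i.succ : Set X) \ (U i.castSucc : Set X) →
        ∃ h : T ⟶ V, h ≫ p = g

/-! If `S` is the difference of two consecutive opens of the given chain, the reduced scheme
structure on `S` lifts to `s : S ⟶ V₁ ⨿ ⋯ ⨿ Vₘ`. The preimages under `s` of the summands `Vⱼ`
cover `S` by opens, so they are cut out on `S` by opens `Oⱼ` of `X`, and every morphism from a
reduced scheme into `S ∩ Oⱼ` lifts to `Vⱼ`. Adding the `Oⱼ` one at a time refines the step of the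
chain into `m` steps, each with its own single index. -/

theorem reflTransGen_iff_exists_relSeries {α : Type*} {r : α → α → Prop} {a b : α} :
    Relation.ReflTransGen r a b ↔
      ∃ s : RelSeries {(x, y) : α × α | r x y}, s.head = a ∧ s.last = b := by
  constructor
  · intro h
    obtain ⟨l, hl, hchain, rfl, rfl⟩ := List.exists_isChain_ne_nil_of_relationReflTransGen h
    refine ⟨.fromListIsChain l hl hchain, RelSeries.head_fromListIsChain .., ?_⟩
    simp only [← RelSeries.getLast_toList, RelSeries.toList_fromListIsChain]
  · rintro ⟨s, rfl, rfl⟩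
    rw [← s.head_toList, ← s.getLast_toList]
    exact List.relationReflTransGen_of_exists_isChain s.toList s.isChain_toList s.toList_ne_nil

theorem isReduced_subscheme_vanishingIdeal {X : Scheme.{u}} (Z : TopologicalSpace.Closeds X) :
    IsReduced (Scheme.IdealSheafData.vanishingIdeal Z).subscheme := by
  let I := Scheme.IdealSheafData.vanishingIdeal Z
  have isReduced_chart (W : X.affineOpens) : IsReduced (I.subschemeCover.openCover.X W) := by
    have : _root_.IsReduced (Γ(X, W) ⧸ I.ideal W) :=
      (Ideal.isRadical_iff_quotient_reduced _).1 (PrimeSpectrum.isRadical_vanishingIdeal _)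
    change IsReduced (Spec (.of (Γ(X, W) ⧸ I.ideal W)))
    infer_instance
  exact @IsReduced.of_openCover _ I.subschemeCover.openCover isReduced_chart

theorem exists_isReduced_isImmersion_of_isLocallyClosed {X : Scheme.{u}} {S : Set X}
    (hS : IsLocallyClosed S) :
    ∃ (Z : Scheme.{u}) (i : Z ⟶ X), IsReduced Z ∧ IsImmersion i ∧ Set.range i = S := by
  obtain ⟨U, C, hU, hC, rfl⟩ := hS
  let B : X.Opens := ⟨U, hU⟩
  let I := Scheme.IdealSheafData.vanishingIdeal
    (⟨B.ι ⁻¹' C, hC.preimage B.ι.continuous⟩ : TopologicalSpace.Closeds B)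
  refine ⟨I.subscheme, I.subschemeι ≫ B.ι, isReduced_subscheme_vanishingIdeal _,
    inferInstance, ?_⟩
  calc Set.range (I.subschemeι ≫ B.ι)
      = B.ι '' Set.range I.subschemeι := by
        rw [Scheme.Hom.comp_base, TopCat.coe_comp, Set.range_comp]
    _ = B.ι '' (B.ι ⁻¹' C) := by
        rw [I.range_subschemeι, Scheme.IdealSheafData.coe_support_vanishingIdeal]; rfl
    _ = U ∩ C := by
        rw [Set.image_preimage_eq_range_inter, Scheme.Opens.range_ι]; rfl

theorem exists_comp_eq_of_isImmersion_of_isReduced {X Z T : Scheme.{u}} (i : Z ⟶ X)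
    [IsImmersion i] [IsReduced T] (g : T ⟶ X) (hg : Set.range g ⊆ Set.range i) :
    ∃ h : T ⟶ Z, h ≫ i = g := by
  have range_snd : Set.range (pullback.snd i g) = Set.univ := by
    rw [Scheme.Pullback.range_snd, Set.preimage_eq_univ_iff]
    exact hg
  have : Surjective (pullback.snd i g) := ⟨Set.range_eq_univ.1 range_snd⟩
  have : IsClosedImmersion (pullback.snd i g) :=
    .of_isPreimmersion _ (range_snd ▸ isClosed_univ)
  have : IsIso (pullback.snd i g) := isIso_of_isClosedImmersion_of_surjective _
  exact ⟨inv (pullback.snd i g) ≫ pullback.fst i g, by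
    rw [Category.assoc, pullback.condition, IsIso.inv_hom_id_assoc]⟩

/-- The lifting condition of a Nisnevich epi over a subset `S` of `X`: morphisms from reduced
schemes with image in `S` factor through `p`. For locally closed `S` this encodes that the
inclusion of the reduced subscheme `S` lifts along `p`. -/
def LiftsReducedOn {V X : Scheme.{u}} (p : V ⟶ X) (S : Set X) : Prop :=
  ∀ (T : Scheme.{u}) [IsReduced T] (g : T ⟶ X), Set.range g ⊆ S → ∃ h : T ⟶ V, h ≫ p = g

theorem LiftsReducedOn.mono {V X : Scheme.{u}} {p : V ⟶ X} {S S' : Set X}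
    (h : LiftsReducedOn p S') (hSS' : S ⊆ S') : LiftsReducedOn p S :=
  fun T _ g hg ↦ h T g (hg.trans hSS')

theorem LiftsReducedOn.exists_opens_of_openCover {V X : Scheme.{u}} {p : V ⟶ X} {S : Set X}
    (hp : LiftsReducedOn p S) (hS : IsLocallyClosed S) (𝒰 : V.OpenCover) :
    ∃ O : 𝒰.I₀ → X.Opens, S ⊆ ⋃ j, (O j : Set X) ∧
      ∀ j, LiftsReducedOn (𝒰.f j ≫ p) (S ∩ O j) := by
  obtain ⟨Z, i, _, _, rfl⟩ := exists_isReduced_isImmersion_of_isLocallyClosed hS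
  obtain ⟨s, hs⟩ := hp Z i subset_rfl
  have exists_open (j : 𝒰.I₀) :
      ∃ O : X.Opens, i ⁻¹' (O : Set X) = s ⁻¹' Set.range (𝒰.f j) := by
    obtain ⟨O, hO, hO_eq⟩ := i.isEmbedding.isOpen_iff.1 (s ⁻¹ᵁ (𝒰.f j).opensRange).isOpen
    exact ⟨⟨O, hO⟩, hO_eq⟩
  choose O hO using exists_open
  refine ⟨O, ?_, fun j T _ g hg ↦ ?_⟩
  · rintro _ ⟨z, rfl⟩
    obtain ⟨j, y, hy⟩ := 𝒰.exists_eq (s z)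
    have hz : z ∈ i ⁻¹' (O j : Set X) := hO j ▸ ⟨y, hy⟩
    exact Set.mem_iUnion_of_mem j hz
  · obtain ⟨h, rfl⟩ :=
      exists_comp_eq_of_isImmersion_of_isReduced i g (hg.trans Set.inter_subset_left)
    have range_subset : Set.range (h ≫ s) ⊆ Set.range (𝒰.f j) := by
      rintro _ ⟨t, rfl⟩
      have ht : h t ∈ i ⁻¹' (O j : Set X) := (hg ⟨t, rfl⟩).2
      exact (hO j ▸ ht :)
    refine ⟨IsOpenImmersion.lift (𝒰.f j) (h ≫ s) range_subset, ?_⟩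
    rw [IsOpenImmersion.lift_fac_assoc, Category.assoc, hs]

section SplittingSequence

variable {X : Scheme.{u}} {ι : Type*} {V : ι → Scheme.{u}}

/-- One step `A ≤ B` of a splitting sequence: a single member of the family `p` has the lifting
property over `B \ A`. -/
def IsSplittingStep (p : ∀ j, V j ⟶ X) (A B : X.Opens) : Prop :=
  A ≤ B ∧ ∃ j, LiftsReducedOn (p j) ((B : Set X) \ A)

/-- A splitting sequence for the family `p`, the condition that makes a family of étale morphisms
a Nisnevich covering. A single morphism is treated as a family indexed by `Unit`. -/
def HasSplittingSequence (p : ∀ j, V j ⟶ X) : Prop :=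
  ∃ (n : ℕ) (U : Fin (n + 1) → X.Opens), Monotone U ∧ U 0 = ⊥ ∧ U (Fin.last n) = ⊤ ∧
    ∀ i : Fin n, ∃ j, LiftsReducedOn (p j) ((U i.succ : Set X) \ U i.castSucc)

theorem hasSplittingSequence_iff_reflTransGen {p : ∀ j, V j ⟶ X} :
    HasSplittingSequence p ↔ Relation.ReflTransGen (IsSplittingStep p) ⊥ ⊤ := by
  rw [reflTransGen_iff_exists_relSeries]
  constructor
  · rintro ⟨n, U, hmono, hbot, htop, hlift⟩
    exact ⟨⟨n, U, fun i ↦ ⟨hmono i.castSucc_le_succ, hlift i⟩⟩, hbot, htop⟩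
  · rintro ⟨U, hbot, htop⟩
    exact ⟨U.length, U, Fin.monotone_iff_le_succ.2 fun i ↦ (U.step i).1, hbot, htop,
      fun i ↦ (U.step i).2⟩

theorem reflTransGen_isSplittingStep_of_opens [Finite ι] {p : ∀ j, V j ⟶ X} {A B : X.Opens}
    (hAB : A ≤ B) {O : ι → X.Opens} (hcover : (B : Set X) \ A ⊆ ⋃ j, (O j : Set X))
    (hlift : ∀ j, LiftsReducedOn (p j) (((B : Set X) \ A) ∩ O j)) :
    Relation.ReflTransGen (IsSplittingStep p) A B := by
  classical
  have := Fintype.ofFinite ι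
  have reach (s : Finset ι) :
      Relation.ReflTransGen (IsSplittingStep p) A (A ⊔ s.sup fun j ↦ B ⊓ O j) := by
    induction s using Finset.induction with
    | empty => rw [Finset.sup_empty, sup_bot_eq]
    | insert j s _ ih =>
      refine ih.tail ⟨sup_le_sup_left (Finset.sup_mono (Finset.subset_insert j s)) A, j,
        (hlift j).mono ?_⟩
      rw [Finset.sup_insert, sup_left_comm]
      rintro x ⟨hx | hx, hx'⟩
      · exact ⟨⟨hx.1, fun hxA ↦ hx' (Or.inl hxA)⟩, hx.2⟩
      · exact absurd hx hx'
  have sup_eq : (A ⊔ Finset.univ.sup fun j ↦ B ⊓ O j) = B := by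
    refine le_antisymm (sup_le hAB (Finset.sup_le fun j _ ↦ inf_le_left)) fun x hxB ↦ ?_
    by_cases hxA : x ∈ A
    · exact Or.inl hxA
    · obtain ⟨j, hxj⟩ := Set.mem_iUnion.1 (hcover ⟨hxB, hxA⟩)
      exact Or.inr (Finset.le_sup (f := fun j ↦ B ⊓ O j) (Finset.mem_univ j) ⟨hxB, hxj⟩)
  exact sup_eq ▸ reach Finset.univ

theorem HasSplittingSequence.of_openCover {W : Scheme.{u}} {q : W ⟶ X}
    (hq : HasSplittingSequence fun _ : Unit ↦ q) (𝒰 : W.OpenCover) [Finite 𝒰.I₀] :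
    HasSplittingSequence fun j ↦ 𝒰.f j ≫ q := by
  rw [hasSplittingSequence_iff_reflTransGen] at hq ⊢
  refine Relation.reflTransGen_closed (fun A B ⟨hAB, _, hlift⟩ ↦ ?_) _ _ hq
  have hS : IsLocallyClosed ((B : Set X) \ A) :=
    B.isOpen.isLocallyClosed.inter A.isOpen.isClosed_compl.isLocallyClosed
  obtain ⟨O, hcover, hO⟩ := hlift.exists_opens_of_openCover hS 𝒰
  exact reflTransGen_isSplittingStep_of_opens hAB hcover hO

theorem nisnevich_covering_of_isNisnevichEpi_sigmaDesc_general [Finite ι] (p : ∀ j, V j ⟶ X)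
    (hdesc : HasSplittingSequence fun _ : Unit ↦ Sigma.desc p) : HasSplittingSequence p := by
  have : Finite (sigmaOpenCover V).I₀ := ‹Finite ι›
  have ι_comp_desc : (fun j ↦ (sigmaOpenCover V).f j ≫ Sigma.desc p) = p :=
    funext fun j ↦ Sigma.ι_desc p j
  exact ι_comp_desc ▸ hdesc.of_openCover (sigmaOpenCover V)

end SplittingSequence

/-- Let `X` be a qcqs scheme and `V₁, …, Vₘ ⟶ X` finitely many étale
morphisms such that the induced morphism `V₁ ⨿ ⋯ ⨿ Vₘ ⟶ X` is a Nisnevich epi. Then the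
family `{Vⱼ ⟶ X}` is a Nisnevich covering: there is a finite chain of opens
`∅ = U₀ ⊆ ⋯ ⊆ Uₙ = X` such that for each `i` there is a single index `j(i)` such that every
morphism from a reduced scheme to `X` with set-theoretic image in `Uᵢ \ Uᵢ₋₁` factors
through `V_{j(i)} ⟶ X`. -/
theorem nisnevich_covering_of_isNisnevichEpi_sigmaDesc
    (X : Scheme.{u}) [CompactSpace X] [QuasiSeparatedSpace X]
    (m : ℕ) (V : Fin m → Scheme.{u}) (p : ∀ j, V j ⟶ X) (hp : ∀ j, IsEtale (p j))
    (hdesc : IsNisnevichEpi (Sigma.desc p)) :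
    ∃ (n : ℕ) (U : Fin (n + 1) → X.Opens), Monotone U ∧ U 0 = ⊥ ∧ U (Fin.last n) = ⊤ ∧
      ∀ i : Fin n, ∃ j : Fin m,
        ∀ (T : Scheme.{u}) [IsReduced T] (g : T ⟶ X),
          Set.range g.base ⊆ (U i.succ : Set X) \ (U i.castSucc : Set X) →
          ∃ h : T ⟶ V j, h ≫ p j = g := by
  obtain ⟨-, n, U, hmono, hbot, htop, hlift⟩ := hdesc
  exact nisnevich_covering_of_isNisnevichEpi_sigmaDesc_general p
    ⟨n, U, hmono, hbot, htop, fun i ↦ ⟨(), hlift i⟩⟩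
end

section
/- Let f : A ⟶ B be a flat homomorphism of commutative rings and let S ⊆ A be a set of elements such that for every s ∈ S the induced map A/sA ⟶ B/f(s)B is an isomorphism. Let A[S⁻¹] denote the localization of A at the multiplicative submonoid generated by S, let B[f(S)⁻¹] denote the localization of B at the multiplicative submonoid generated by f(S), and let φ : A[S⁻¹] ⟶ B[f(S)⁻¹] be the induced map. Then the sequence 0 ⟶ A ⟶ B ⊕ A[S⁻¹] ⟶ B[f(S)⁻¹] ⟶ 0 is a short exact sequence of A-modules, where the first map is a ↦ (f(a), a/1) and the second map is (b, x) ↦ b/1 − φ(x); that is, the first map is injective, its image equals the kernel of the second map, and the second map is surjective. -/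
/-- The induced ring homomorphism `A[S⁻¹] ⟶ B[f(S)⁻¹]` between the localizations of `A` at the
multiplicative submonoid generated by `S` and of `B` at the multiplicative submonoid generated
by `f(S)`. -/
noncomputable def locSetMap {A B : Type*} [CommRing A] [CommRing B] (f : A →+* B) (S : Set A) :
    Localization (Submonoid.closure S) →+* Localization (Submonoid.closure (f '' S)) :=
  IsLocalization.map _ f
    (show Submonoid.closure S ≤ (Submonoid.closure (f '' S)).comap f from
      Submonoid.closure_le.mpr fun _ hs =>
        Submonoid.mem_comap.mpr (Submonoid.subset_closure (Set.mem_image_of_mem f hs)))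

/-!
Write `M[t]` for the `t`-torsion of `M`. When `N` is flat, an element of `N[t]` is a combination
`∑ aⱼ • yⱼ` with coefficients in `R[t]`, hence depends only on the classes of the `yⱼ` in `N / tN`.
A map `f : M → N` of flat modules which is bijective modulo `t` is therefore bijective on
`t`-torsion, and this passes bijectivity modulo `t` on to products of such `t`. The square formed by
`f` and its localization is then bicartesian, because the maps it induces between the
kernels and between the cokernels of the two localization maps are isomorphisms.
-/

section BijectiveMod

variable {R M N : Type*} [CommRing R] [AddCommGroup M] [Module R M] [AddCommGroup N] [Module R N]

/-- Injectivity of the map `M / tM → N / tN` induced by `f`, in terms of elements so that no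
quotient modules are needed. -/
def InjectiveMod (f : M →ₗ[R] N) (t : R) : Prop :=
  ∀ ⦃m : M⦄ ⦃n : N⦄, f m = t • n → ∃ m₁ : M, m = t • m₁

/-- Surjectivity of the map `M / tM → N / tN` induced by `f`, in terms of elements so that no
quotient modules are needed. -/
def SurjectiveMod (f : M →ₗ[R] N) (t : R) : Prop :=
  ∀ n : N, ∃ (m : M) (n₁ : N), n = f m + t • n₁

theorem exists_eq_sum_smul_of_smul_eq_zero [Module.Flat R M] {t : R} {m : M} (h : t • m = 0) :
    ∃ (k : ℕ) (a : Fin k → R) (y : Fin k → M), m = ∑ j, a j • y j ∧ ∀ j, t * a j = 0 := by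
  obtain ⟨k, a, y, hm, ha⟩ := Module.Flat.isTrivialRelation_of_sum_smul_eq_zero
    (f := fun _ : Unit ↦ t) (x := fun _ ↦ m) (by simpa using h)
  exact ⟨k, a (), y, hm (), by simpa using ha⟩

variable {f : M →ₗ[R] N} {s t : R}

theorem SurjectiveMod.exists_map_eq_of_smul_eq_zero [Module.Flat R N] (ht : SurjectiveMod f t)
    {n : N} (hn : t • n = 0) : ∃ m : M, f m = n ∧ t • m = 0 := by
  obtain ⟨k, a, y, rfl, ha⟩ := exists_eq_sum_smul_of_smul_eq_zero hn
  choose m n' hy using fun j ↦ ht (y j)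
  refine ⟨∑ j, a j • m j, ?_, ?_⟩
  · simp only [map_sum, map_smul]
    refine Finset.sum_congr rfl fun j _ ↦ ?_
    rw [hy j, smul_add, smul_smul, mul_comm, ha, zero_smul, add_zero]
  · simp only [Finset.smul_sum, smul_smul, ha, zero_smul, Finset.sum_const_zero]

theorem InjectiveMod.eq_zero_of_smul_eq_zero [Module.Flat R M] [Module.Flat R N]
    (hinj : InjectiveMod f t) (hsurj : SurjectiveMod f t) {m : M} (htm : t • m = 0)
    (hfm : f m = 0) : m = 0 := by
  obtain ⟨k, a, y, rfl, ha⟩ := exists_eq_sum_smul_of_smul_eq_zero htm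
  obtain ⟨l, b, n, hy, hab⟩ := Module.Flat.isTrivialRelation_of_sum_smul_eq_zero
    (f := a) (x := f ∘ y) (by simpa only [map_sum, map_smul, Function.comp_apply] using hfm)
  choose u n' hn using fun i ↦ hsurj (n i)
  have hlift (j) : f (y j - ∑ i, b j i • u i) = t • ∑ i, b j i • n' i := by
    rw [map_sub, show f (y j) = _ from hy j, map_sum, ← Finset.sum_sub_distrib, Finset.smul_sum]
    refine Finset.sum_congr rfl fun i _ ↦ ?_
    rw [map_smul, ← smul_sub, smul_comm t]
    exact congrArg (b j i • ·) (sub_eq_of_eq_add' (hn i))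
  have hmul (j) : a j • y j = a j • ∑ i, b j i • u i := by
    obtain ⟨w, hw⟩ := hinj (hlift j)
    rw [← sub_eq_zero, ← smul_sub, hw, smul_smul, mul_comm, ha, zero_smul]
  calc ∑ j, a j • y j
      = ∑ j, ∑ i, (a j * b j i) • u i := by simp only [hmul, Finset.smul_sum, smul_smul]
    _ = ∑ i, (∑ j, a j * b j i) • u i := by rw [Finset.sum_comm]; simp only [Finset.sum_smul]
    _ = 0 := by simp only [hab, zero_smul, Finset.sum_const_zero]

theorem injectiveMod_one (f : M →ₗ[R] N) : InjectiveMod f 1 :=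
  fun m _ _ ↦ ⟨m, (one_smul R m).symm⟩

theorem surjectiveMod_one (f : M →ₗ[R] N) : SurjectiveMod f 1 :=
  fun n ↦ ⟨0, n, by rw [map_zero, zero_add, one_smul]⟩

theorem SurjectiveMod.mul (ht : SurjectiveMod f t) (hs : SurjectiveMod f s) :
    SurjectiveMod f (t * s) := by
  intro n
  obtain ⟨m, n₁, rfl⟩ := ht n
  obtain ⟨m₁, n₂, rfl⟩ := hs n₁
  exact ⟨m + t • m₁, n₂, by rw [map_add, map_smul, smul_add, mul_smul, add_assoc]⟩

theorem InjectiveMod.mul [Module.Flat R N] (ht : InjectiveMod f t) (ht' : SurjectiveMod f t)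
    (hs : InjectiveMod f s) : InjectiveMod f (t * s) := by
  intro m n h
  obtain ⟨m₁, rfl⟩ := ht (h.trans (mul_smul t s n))
  have htors : t • (f m₁ - s • n) = 0 := by
    rw [smul_sub, ← map_smul, h, mul_smul, sub_self]
  obtain ⟨c, hc, htc⟩ := ht'.exists_map_eq_of_smul_eq_zero htors
  obtain ⟨m₂, hm₂⟩ := hs (m := m₁ - c) (n := n) (by rw [map_sub, hc, sub_sub_cancel])
  exact ⟨m₂, by rw [mul_smul, ← hm₂, smul_sub, htc, sub_zero]⟩

theorem injectiveMod_and_surjectiveMod_of_mem_closure [Module.Flat R N] {S : Set R}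
    (hf : ∀ s ∈ S, InjectiveMod f s ∧ SurjectiveMod f s) (ht : t ∈ Submonoid.closure S) :
    InjectiveMod f t ∧ SurjectiveMod f t := by
  induction ht using Submonoid.closure_induction with
  | mem s hs => exact hf s hs
  | one => exact ⟨injectiveMod_one f, surjectiveMod_one f⟩
  | mul x y _ _ hx hy => exact ⟨hx.1.mul hx.2 hy.1, hx.2.mul hy.2⟩

end BijectiveMod

section LocalizationSquare

variable {R M N M' N' : Type*} [CommRing R] [AddCommGroup M] [Module R M] [AddCommGroup N]
  [Module R N] [AddCommGroup M'] [Module R M'] [AddCommGroup N'] [Module R N']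
  (P : Submonoid R) {f : M →ₗ[R] N} {g : M →ₗ[R] M'} {g' : N →ₗ[R] N'} {φ : M' →ₗ[R] N'}

theorem injective_prod_of_injectiveMod_of_surjectiveMod [Module.Flat R M] [Module.Flat R N]
    [IsLocalizedModule P g] (hinj : ∀ t ∈ P, InjectiveMod f t)
    (hsurj : ∀ t ∈ P, SurjectiveMod f t) : Function.Injective (f.prod g) := by
  refine (injective_iff_map_eq_zero _).mpr fun m hm ↦ ?_
  obtain ⟨hfm, hgm⟩ := Prod.mk.inj hm
  obtain ⟨⟨t, ht⟩, htm⟩ := (IsLocalizedModule.eq_zero_iff P g).mp hgm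
  exact (hinj t ht).eq_zero_of_smul_eq_zero (hsurj t ht) htm hfm

theorem exists_map_eq_of_injectiveMod_of_surjectiveMod [Module.Flat R N]
    [IsLocalizedModule P g] [IsLocalizedModule P g'] (hφ : φ ∘ₗ g = g' ∘ₗ f)
    (hinj : ∀ t ∈ P, InjectiveMod f t) (hsurj : ∀ t ∈ P, SurjectiveMod f t)
    {n : N} {x : M'} (hx : g' n = φ x) : ∃ m : M, f m = n ∧ g m = x := by
  obtain ⟨⟨m, t⟩, htx⟩ := IsLocalizedModule.surj P g x
  have hloc : g' (t • n - f m) = 0 := by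
    rw [map_sub, g'.map_smul_of_tower, hx, ← φ.map_smul_of_tower, htx, sub_eq_zero]
    exact LinearMap.congr_fun hφ m
  obtain ⟨u, hu⟩ := (IsLocalizedModule.eq_zero_iff P g').mp hloc
  obtain ⟨c, hc, huc⟩ := (hsurj u u.2).exists_map_eq_of_smul_eq_zero hu
  -- Correcting the numerator `m` by `c` does not change the fraction `x = m / t`.
  obtain ⟨m', hm'⟩ := hinj t t.2 (m := m + c) (n := n) (by
    rw [map_add, hc, add_sub_cancel, Submonoid.smul_def])
  have hn : (t : R) • (n - f m') = 0 := by
    rw [smul_sub, ← map_smul, ← hm', map_add, hc, add_sub_cancel, Submonoid.smul_def, sub_self]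
  obtain ⟨d, hd, htd⟩ := (hsurj t t.2).exists_map_eq_of_smul_eq_zero hn
  refine ⟨m' + d, by rw [map_add, hd, add_sub_cancel], IsLocalizedModule.smul_injective g t ?_⟩
  calc t • g (m' + d)
      = g (m + c) := by rw [← g.map_smul_of_tower, Submonoid.smul_def, smul_add, htd, add_zero, hm']
    _ = t • x := by rw [map_add, (IsLocalizedModule.eq_zero_iff P g).mpr ⟨u, huc⟩, add_zero, htx]

theorem surjective_sub_of_surjectiveMod [IsLocalizedModule P g] [IsLocalizedModule P g']
    (hφ : φ ∘ₗ g = g' ∘ₗ f) (hsurj : ∀ t ∈ P, SurjectiveMod f t) :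
    Function.Surjective (g' ∘ₗ LinearMap.fst R N M' - φ ∘ₗ LinearMap.snd R N M') := by
  intro y
  obtain ⟨⟨n, t⟩, hty⟩ := IsLocalizedModule.surj P g' y
  obtain ⟨m, n', rfl⟩ := hsurj t t.2 n
  obtain ⟨x, hx⟩ : ∃ x : M', t • x = g m :=
    ⟨IsLocalizedModule.mk' g m t, IsLocalizedModule.mk'_cancel' g m t⟩
  refine ⟨(n', -x), IsLocalizedModule.smul_injective g' t ?_⟩
  calc t • (g' n' - φ (-x))
      = t • g' n' + φ (t • x) := by rw [map_neg, sub_neg_eq_add, smul_add, φ.map_smul_of_tower]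
    _ = t • g' n' + g' (f m) := by rw [hx]; exact congrArg _ (LinearMap.congr_fun hφ m)
    _ = t • y := by rw [hty, map_add, add_comm, ← Submonoid.smul_def, g'.map_smul_of_tower]

theorem shortExact_of_flat_quotient_iso_general [Module.Flat R M] [Module.Flat R N] (S : Set R)
    [IsLocalizedModule (Submonoid.closure S) g] [IsLocalizedModule (Submonoid.closure S) g']
    (hφ : φ ∘ₗ g = g' ∘ₗ f) (hf : ∀ s ∈ S, InjectiveMod f s ∧ SurjectiveMod f s) :
    Function.Injective (f.prod g) ∧
      Function.Exact (f.prod g) (g' ∘ₗ LinearMap.fst R N M' - φ ∘ₗ LinearMap.snd R N M') ∧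
      Function.Surjective (g' ∘ₗ LinearMap.fst R N M' - φ ∘ₗ LinearMap.snd R N M') := by
  have hinj (t) (ht : t ∈ Submonoid.closure S) : InjectiveMod f t :=
    (injectiveMod_and_surjectiveMod_of_mem_closure hf ht).1
  have hsurj (t) (ht : t ∈ Submonoid.closure S) : SurjectiveMod f t :=
    (injectiveMod_and_surjectiveMod_of_mem_closure hf ht).2
  refine ⟨injective_prod_of_injectiveMod_of_surjectiveMod _ hinj hsurj, fun p ↦ ⟨fun hp ↦ ?_, ?_⟩,
    surjective_sub_of_surjectiveMod _ hφ hsurj⟩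
  · obtain ⟨m, hfm, hgm⟩ := exists_map_eq_of_injectiveMod_of_surjectiveMod _ hφ hinj hsurj
      (sub_eq_zero.mp hp)
    exact ⟨m, Prod.ext hfm hgm⟩
  · rintro ⟨m, rfl⟩
    exact sub_eq_zero.mpr (LinearMap.congr_fun hφ m).symm

end LocalizationSquare

section Algebra

variable {A B : Type*} [CommRing A] [CommRing B] [Algebra A B]

theorem injectiveMod_of_quotientMap_injective {s : A}
    {h : Ideal.span {s} ≤ (Ideal.span {algebraMap A B s}).comap (algebraMap A B)}
    (hs : Function.Injective (Ideal.quotientMap _ (algebraMap A B) h)) :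
    InjectiveMod (Algebra.linearMap A B) s := by
  intro a b hab
  have ha : Ideal.Quotient.mk (Ideal.span {s}) a = 0 := by
    refine hs ?_
    rw [map_zero, Ideal.quotientMap_mk, Ideal.Quotient.eq_zero_iff_mem, Ideal.mem_span_singleton]
    exact ⟨b, hab.trans (Algebra.smul_def s b)⟩
  exact Ideal.mem_span_singleton.mp (Ideal.Quotient.eq_zero_iff_mem.mp ha)

theorem surjectiveMod_of_quotientMap_surjective {s : A}
    {h : Ideal.span {s} ≤ (Ideal.span {algebraMap A B s}).comap (algebraMap A B)}
    (hs : Function.Surjective (Ideal.quotientMap _ (algebraMap A B) h)) :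
    SurjectiveMod (Algebra.linearMap A B) s := by
  intro b
  obtain ⟨q, hq⟩ := hs (Ideal.Quotient.mk _ b)
  obtain ⟨a, rfl⟩ := Ideal.Quotient.mk_surjective q
  rw [Ideal.quotientMap_mk, eq_comm, Ideal.Quotient.eq, Ideal.mem_span_singleton] at hq
  obtain ⟨b', hb'⟩ := hq
  exact ⟨a, b', by rw [Algebra.linearMap_apply, Algebra.smul_def, ← hb', add_sub_cancel]⟩

variable (A B)

/-- The map `locSetMap (algebraMap A B) S` as a homomorphism of `A`-algebras, so that the
localization square can be treated as a square of `A`-modules. -/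
noncomputable def locSetAlgHom (S : Set A) :
    Localization (Submonoid.closure S) →ₐ[A]
      Localization (Submonoid.closure (algebraMap A B '' S)) where
  __ := locSetMap (algebraMap A B) S
  commutes' := IsLocalization.map_eq _

theorem locSetAlgHom_comp_linearMap (S : Set A) :
    (locSetAlgHom A B S).toLinearMap ∘ₗ Algebra.linearMap A _ =
      (IsScalarTower.toAlgHom A B _).toLinearMap ∘ₗ Algebra.linearMap A B :=
  LinearMap.ext_ring (by simp)

instance isLocalizedModule_closure_image (S : Set A) :
    IsLocalizedModule (Submonoid.closure S) (IsScalarTower.toAlgHom A B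
      (Localization (Submonoid.closure (algebraMap A B '' S)))).toLinearMap := by
  rw [isLocalizedModule_iff_isLocalization, Algebra.algebraMapSubmonoid, MonoidHom.map_mclosure]
  exact Localization.isLocalization

end Algebra

/-- Let `f : A ⟶ B` be a flat homomorphism of commutative rings (here encoded
by an algebra structure, `f = algebraMap A B`) and `S ⊆ A` a set of elements such that for
every `s ∈ S` the induced map `A/sA ⟶ B/f(s)B` is an isomorphism.  Then the sequence
`0 ⟶ A ⟶ B ⊕ A[S⁻¹] ⟶ B[f(S)⁻¹] ⟶ 0`, with first map `a ↦ (f(a), a/1)` and second map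
`(b, x) ↦ b/1 − φ(x)`, is a short exact sequence: the first map is injective, its image is the
kernel of the second map, and the second map is surjective. -/
theorem shortExact_of_flat_quotient_iso
    {A B : Type*} [CommRing A] [CommRing B] [Algebra A B] [Module.Flat A B]
    (S : Set A)
    (hiso : ∀ s ∈ S, Function.Bijective
      (Ideal.quotientMap (Ideal.span {algebraMap A B s}) (algebraMap A B)
        (by rw [Ideal.span_le, Set.singleton_subset_iff]
            exact Ideal.mem_comap.mpr (Ideal.subset_span (Set.mem_singleton _))))) :
    Function.Injective (fun a : A =>
        ((algebraMap A B a, algebraMap A (Localization (Submonoid.closure S)) a) :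
          B × Localization (Submonoid.closure S))) ∧
    (∀ p : B × Localization (Submonoid.closure S),
        algebraMap B (Localization (Submonoid.closure (algebraMap A B '' S))) p.1 -
            locSetMap (algebraMap A B) S p.2 = 0 ↔
          p ∈ Set.range (fun a : A =>
            ((algebraMap A B a, algebraMap A (Localization (Submonoid.closure S)) a) :
              B × Localization (Submonoid.closure S)))) ∧
    Function.Surjective (fun p : B × Localization (Submonoid.closure S) =>
        algebraMap B (Localization (Submonoid.closure (algebraMap A B '' S))) p.1 -
          locSetMap (algebraMap A B) S p.2) := by
  exact shortExact_of_flat_quotient_iso_general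
    (N' := Localization (Submonoid.closure (algebraMap A B '' S)))
    (g := Algebra.linearMap A (Localization (Submonoid.closure S))) S
    (locSetAlgHom_comp_linearMap A B S) fun s hs ↦
      ⟨injectiveMod_of_quotientMap_injective (hiso s hs).1,
        surjectiveMod_of_quotientMap_surjective (hiso s hs).2⟩
end

section
/- Let f : A ⟶ B be a flat homomorphism of commutative rings and let S ⊆ A be a set of elements such that for every s ∈ S the induced map A/sA ⟶ B/f(s)B is an isomorphism. Then for every A-module M, the A-linear map M ⟶ (B ⊗_A M) ⊕ M[S⁻¹] given by m ↦ (1 ⊗ m, m/1) is injective, where M[S⁻¹] denotes the localization of M at the multiplicative submonoid of A generated by S. -/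
open scoped TensorProduct

/-!
If `e ⊗ m = 0` in `P ⊗ M` with `P` flat, then `e ∈ I • P` for `I` the annihilator of `m`. If also
`m / 1 = 0`, then `I` contains a product of elements of `S`. Were `I` proper, a maximal ideal `p`
containing it would therefore meet `S` and satisfy `e ∈ p • P`. For `P = B` and `e = 1` this reads
`pB = B`, which is impossible when `A / sA ≅ B / sB` for some `s ∈ p`.
-/

theorem tmul_eq_zero_iff_mem_torsionOf_smul_top {A P M : Type*} [CommRing A]
    [AddCommGroup P] [Module A P] [Module.Flat A P] [AddCommGroup M] [Module A M] {e : P} {m : M} :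
    e ⊗ₜ[A] m = 0 ↔ e ∈ Ideal.torsionOf A M m • (⊤ : Submodule A P) := by
  let I := Ideal.torsionOf A M m
  let φ : A ⧸ I →ₗ[A] M := I.liftQ (LinearMap.toSpanSingleton A M m) le_rfl
  have φ_injective : Function.Injective φ :=
    LinearMap.ker_eq_bot.mp (Submodule.ker_liftQ_eq_bot' I _ rfl)
  have lTensor_φ_injective : Function.Injective (φ.lTensor P) :=
    Module.Flat.lTensor_preserves_injective_linearMap φ φ_injective
  have φ_one : φ (Ideal.Quotient.mk I 1) = m := one_smul A m
  rw [← Submodule.Quotient.mk_eq_zero, ← one_smul A e,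
    ← TensorProduct.tensorQuotEquivQuotSMul_tmul_mk, LinearEquiv.map_eq_zero_iff, one_smul,
    ← map_eq_zero_iff _ lTensor_φ_injective, LinearMap.lTensor_tmul, φ_one]

theorem inter_nonempty_of_mem_closure_of_mem {A : Type*} [CommSemiring A] {S : Set A}
    {p : Ideal A} (hp : p.IsPrime) {t : A} (ht : t ∈ Submonoid.closure S) (htp : t ∈ p) :
    (S ∩ p).Nonempty := by
  by_contra S_disjoint
  have closure_le : Submonoid.closure S ≤ p.primeCompl :=
    Submonoid.closure_le.mpr fun s hs hsp => S_disjoint ⟨s, hs, hsp⟩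
  exact closure_le ht htp

theorem eq_top_of_map_eq_top_of_quotientMap_bijective {A B : Type*} [CommRing A] [CommRing B]
    {f : A →+* B} {I p : Ideal A} {J : Ideal B} {hIJ : I ≤ J.comap f}
    (hbij : Function.Bijective (Ideal.quotientMap J f hIJ)) (hIp : I ≤ p)
    (hp : p.map f = ⊤) : p = ⊤ := by
  have map_quotientMap_eq_top :
      (p.map (Ideal.Quotient.mk I)).map (Ideal.quotientMap J f hIJ) = ⊤ := by
    rw [Ideal.map_map, Ideal.quotientMap_comp_mk, ← Ideal.map_map, hp, Ideal.map_top]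
  have map_mk_eq_top : p.map (Ideal.Quotient.mk I) = ⊤ :=
    (Ideal.map_eq_top_of_bijective _ hbij).mp map_quotientMap_eq_top
  rw [← sup_eq_right.mpr hIp, ← Ideal.comap_map_quotientMk, map_mk_eq_top, Ideal.comap_top]

theorem one_notMem_smul_top_of_quotientMap_bijective {A B : Type*} [CommRing A] [CommRing B]
    [Algebra A B] {I p : Ideal A} {J : Ideal B} {hIJ : I ≤ J.comap (algebraMap A B)}
    (hbij : Function.Bijective (Ideal.quotientMap J (algebraMap A B) hIJ)) (hIp : I ≤ p)
    (hp : p ≠ ⊤) : (1 : B) ∉ p • (⊤ : Submodule A B) := by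
  rw [Ideal.smul_top_eq_map, Submodule.restrictScalars_mem, ← Ideal.eq_top_iff_one]
  exact mt (eq_top_of_map_eq_top_of_quotientMap_bijective hbij hIp) hp

theorem injective_tensor_prod_localization_of_flat_quotient_iso_general
    {A P : Type*} [CommRing A] [AddCommGroup P] [Module A P] [Module.Flat A P]
    (S : Set A) (e : P)
    (he : ∀ p : Ideal A, p.IsMaximal → (S ∩ p).Nonempty → e ∉ p • (⊤ : Submodule A P))
    (M : Type*) [AddCommGroup M] [Module A M] :
    Function.Injective (fun m : M =>
      ((e ⊗ₜ[A] m, LocalizedModule.mkLinearMap (Submonoid.closure S) M m) :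
        (P ⊗[A] M) × LocalizedModule (Submonoid.closure S) M)) := by
  refine (injective_iff_map_eq_zero ((TensorProduct.mk A P M e).prod
    (LocalizedModule.mkLinearMap (Submonoid.closure S) M))).mpr fun m hm => ?_
  obtain ⟨tmul_eq_zero, loc_eq_zero⟩ := Prod.mk.inj hm
  obtain ⟨t, ht, ht_smul⟩ := LocalizedModule.mem_ker_mkLinearMap_iff.mp loc_eq_zero
  by_contra hm_ne
  obtain ⟨p, hp, hle⟩ := Ideal.exists_le_maximal (Ideal.torsionOf A M m)
    (mt (Ideal.torsionOf_eq_top_iff A m).mp hm_ne)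
  exact he p hp (inter_nonempty_of_mem_closure_of_mem hp.isPrime ht (hle ht_smul))
    (Submodule.smul_mono_left hle (tmul_eq_zero_iff_mem_torsionOf_smul_top.mp tmul_eq_zero))

/-- Let `f : A ⟶ B` be a flat homomorphism of commutative rings (here encoded
by an algebra structure, `f = algebraMap A B`) and `S ⊆ A` a set of elements such that for
every `s ∈ S` the induced map `A/sA ⟶ B/f(s)B` is an isomorphism.  Then for every `A`-module
`M`, the map `M ⟶ (B ⊗_A M) ⊕ M[S⁻¹]`, `m ↦ (1 ⊗ m, m/1)`, is injective. -/
theorem injective_tensor_prod_localization_of_flat_quotient_iso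
    {A B : Type*} [CommRing A] [CommRing B] [Algebra A B] [Module.Flat A B]
    (S : Set A)
    (hiso : ∀ s ∈ S, Function.Bijective
      (Ideal.quotientMap (Ideal.span {algebraMap A B s}) (algebraMap A B)
        (by rw [Ideal.span_le, Set.singleton_subset_iff]
            exact Ideal.mem_comap.mpr (Ideal.subset_span (Set.mem_singleton _)))))
    (M : Type*) [AddCommGroup M] [Module A M] :
    Function.Injective (fun m : M =>
      ((((1 : B) ⊗ₜ[A] m : B ⊗[A] M),
          LocalizedModule.mkLinearMap (Submonoid.closure S) M m) :
        (B ⊗[A] M) × LocalizedModule (Submonoid.closure S) M)) := by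
  exact injective_tensor_prod_localization_of_flat_quotient_iso_general S (1 : B)
    (fun p hp ⟨s, hs, hsp⟩ => one_notMem_smul_top_of_quotientMap_bijective (hiso s hs)
      ((Ideal.span_singleton_le_iff_mem p).mpr hsp) hp.ne_top) M
end

section
/- Let R be a commutative ring and let M be an invertible R-module, i.e. there exist an R-module N and an R-linear isomorphism M ⊗_R N ≅ R. Then the canonical swap action on M ⊗_R M is trivial: for all x, y ∈ M one has x ⊗ y = y ⊗ x in M ⊗_R M; equivalently, the braiding isomorphism M ⊗_R M ≅ M ⊗_R M exchanging the two tensor factors is equal to the identity. -/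
open scoped TensorProduct

theorem tmul_comm_of_invertible_module_general
    {R : Type*} [CommSemiring R] {M : Type*} [AddCommMonoid M] [Module R M]
    {N : Type*} [AddCommMonoid N] [Module R N]
    (e : (M ⊗[R] N) ≃ₗ[R] R) :
    (∀ x y : M, x ⊗ₜ[R] y = y ⊗ₜ[R] x) ∧
      TensorProduct.comm R M M = LinearEquiv.refl R (M ⊗[R] M) := by
  have : Module.Invertible R M := .left e
  exact ⟨fun _ _ ↦ Module.Invertible.tmul_comm, Module.Invertible.tensorProductComm_eq_refl R M⟩

/-- Let `R` be a commutative ring and `M` an invertible `R`-module, i.e. there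
exist an `R`-module `N` and an `R`-linear isomorphism `M ⊗_R N ≅ R`.  Then the canonical swap
action on `M ⊗_R M` is trivial: `x ⊗ y = y ⊗ x` for all `x, y ∈ M`; equivalently, the braiding
isomorphism of `M ⊗_R M` exchanging the two tensor factors is the identity. -/
theorem tmul_comm_of_invertible_module
    {R : Type*} [CommRing R] {M : Type*} [AddCommGroup M] [Module R M]
    {N : Type*} [AddCommGroup N] [Module R N]
    (e : (M ⊗[R] N) ≃ₗ[R] R) :
    (∀ x y : M, x ⊗ₜ[R] y = y ⊗ₜ[R] x) ∧
      TensorProduct.comm R M M = LinearEquiv.refl R (M ⊗[R] M) :=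
  tmul_comm_of_invertible_module_general e
end

section
/- Let C be a category with pullbacks, A a category with small limits, and F : Cᵒᵖ ⥤ A a presheaf. Let p′ : x ⟶ y, q′ : x ⟶ z, p : z ⟶ w, q : y ⟶ w be morphisms with q ∘ p′ = p ∘ q′. For n ≥ 0, let Uₙ(p′) ⟶ Uₙ(p) denote the morphism x ×_y ⋯ ×_y x ⟶ z ×_w ⋯ ×_w z between the (n+1)-fold fibre products induced by the square (by q′ on factors and q on the bases), and similarly let Uₘ(q′) ⟶ Uₘ(q) denote the induced morphism x ×_z ⋯ ×_z x ⟶ y ×_w ⋯ ×_w y. Assume that F satisfies Čech descent for the morphism Uₙ(p′) ⟶ Uₙ(p) for every n ≥ 0 and for the morphism Uₘ(q′) ⟶ Uₘ(q) for every m ≥ 0. Then F satisfies Čech descent for p if and only if F satisfies Čech descent for q. -/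
open CategoryTheory CategoryTheory.Limits Opposite

universe v u v' u'

variable {C : Type u} [Category.{v} C] [HasFiniteWidePullbacks C]
variable {A : Type u'} [Category.{v'} A]

/-- The canonical cone, with apex `F(w)`, on the cosimplicial object `[n] ↦ F(Uₙ(f))` in `A`
obtained by applying `F : Cᵒᵖ ⥤ A` to the Čech nerve of `f : y ⟶ w`, whose legs are induced by
the augmentation of the Čech nerve. -/
noncomputable def cechDescentCone (F : Cᵒᵖ ⥤ A) {y w : C} (f : y ⟶ w) :
    Cone ((Arrow.mk f).cechNerve.rightOp ⋙ F) where
  pt := F.obj (op w)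
  π :=
    { app := fun m =>
        F.map (WidePullback.base fun _ : Fin (m.len + 1) => (Arrow.mk f).hom).op
      naturality := fun m n g => by
        dsimp
        rw [Category.id_comp, ← F.map_comp, ← op_comp]
        congr 1
        rw [WidePullback.lift_base] }

/-- `F` satisfies **Čech descent** for `f : y ⟶ w` if the canonical cone with apex `F(w)`
exhibits `F(w)` as the limit over the simplex category of the cosimplicial object
`[n] ↦ F(Uₙ(f))`. -/
def CechDescent (F : Cᵒᵖ ⥤ A) {y w : C} (f : y ⟶ w) : Prop :=
  Nonempty (IsLimit (cechDescentCone F f))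

/-- Given a commutative square `q ∘ p′ = p ∘ q′` (i.e. `p′ ≫ q = q′ ≫ p`), this is the induced
morphism `Uₙ(p′) ⟶ Uₙ(p)` between the `(n+1)`-fold fibre products
`x ×_y ⋯ ×_y x ⟶ z ×_w ⋯ ×_w z`, given by `q′` on the factors and by `q` on the bases. -/
noncomputable def inducedCechLevelMap {x y z w : C} (p' : x ⟶ y) (p : z ⟶ w)
    (q' : x ⟶ z) (q : y ⟶ w) (comm : p' ≫ q = q' ≫ p) (n : ℕ) :
    widePullback y (fun _ : Fin (n + 1) => x) (fun _ => p') ⟶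
      widePullback w (fun _ : Fin (n + 1) => z) (fun _ => p) :=
  WidePullback.lift (WidePullback.base _ ≫ q) (fun i => WidePullback.π _ i ≫ q')
    (fun i => by rw [Category.assoc, ← comm, ← Category.assoc, WidePullback.π_arrow])

/-!
The bisimplicial object `Xₙₘ = Uₙ(Uₘ(q') ⟶ Uₘ(q))` is augmented both to `Uₙ(p)` and to `Uₘ(q)`.
Suppose `F` satisfies descent for `q`. The hypothesis on `Uₘ(q') ⟶ Uₘ(q)` says that
`F(Uₘ(q)) = lim_n F(Xₙₘ)`, so `F(w) = lim_m lim_n F(Xₙₘ)`. A cone over `n ↦ F(Uₙ(p))` restricts to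
one over the double diagram, hence lifts uniquely to `F(w)`. The lift is compatible with the given
cone as soon as each family `F(Uₙ(p)) ⟶ F(Xₙₘ)`, `m` varying, is jointly monic. Exchanging the
order of the fibre products, the augmentations of the Čech nerve of `Uₙ(p') ⟶ Uₙ(p)` factor
through the maps `Xₙₘ ⟶ Uₙ(p)`, so this follows from descent for `Uₙ(p') ⟶ Uₙ(p)`.
-/

section DoubleLimit

variable {J J' : Type*} [Category J] [Category J'] {K : J ⥤ J' ⥤ A}

/-- The cone with constant apex over the flipped double diagram obtained by composing a cone over
the apex of a cone `a` with the legs of `a`. -/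
def flippedCompositeCone (a : Cone K) (s : Cone a.pt) : Cone K.flip where
  pt := (Functor.const J).obj s.pt
  π :=
    { app := fun j' =>
        (Functor.const J).map (s.π.app j') ≫ (((evaluation J' A).obj j').mapCone a).π
      naturality := fun i' j' g => by
        ext j
        rw [← s.w g]
        simp [-Cone.w] }

theorem nonempty_isLimit_of_isLimit_flip {a : Cone K} {b : Cone K.flip} {X : A}
    {c : (Functor.const J').obj X ⟶ a.pt} {d : (Functor.const J).obj X ⟶ b.pt}
    (comm : ∀ j j', c.app j' ≫ (a.π.app j).app j' = d.app j ≫ (b.π.app j').app j)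
    (ha : ∀ (j' : J') ⦃T : A⦄ (u v : T ⟶ a.pt.obj j'),
      (∀ j, u ≫ (a.π.app j).app j' = v ≫ (a.π.app j).app j') → u = v)
    (hb : IsLimit b) (hd : IsLimit (Cone.mk X d)) :
    Nonempty (IsLimit (Cone.mk X c)) := by
  let doubleLift (s : Cone a.pt) : s.pt ⟶ X :=
    hd.lift ⟨s.pt, hb.lift (flippedCompositeCone a s)⟩
  have doubleLift_comp (s : Cone a.pt) (j : J) :
      doubleLift s ≫ d.app j = (hb.lift (flippedCompositeCone a s)).app j :=
    hd.fac _ j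
  refine ⟨{ lift := doubleLift
            fac := fun s j' => ha j' _ _ fun j => ?_
            uniq := fun s t ht => ?_ }⟩
  · rw [Category.assoc, comm, ← Category.assoc, doubleLift_comp]
    exact congr_app (hb.fac (flippedCompositeCone a s) j') j
  · have comp_eq_lift :
        (Functor.const J).map t ≫ d = hb.lift (flippedCompositeCone a s) := by
      refine hb.uniq (flippedCompositeCone a s) _ fun j' => ?_
      ext j
      calc (t ≫ d.app j) ≫ (b.π.app j').app j
          = t ≫ c.app j' ≫ (a.π.app j).app j' := by rw [Category.assoc, comm]
        _ = s.π.app j' ≫ (a.π.app j).app j' := by rw [← Category.assoc, ← ht]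
    exact hd.uniq ⟨s.pt, hb.lift (flippedCompositeCone a s)⟩ t (congr_app comp_eq_lift)

end DoubleLimit

/-- `F` is Čech separated for `f : y ⟶ w` if the restrictions from `F(w)` to the `F(Uₙ(f))` are
jointly monic: the uniqueness half of Čech descent. -/
def CechSeparated (F : Cᵒᵖ ⥤ A) {y w : C} (f : y ⟶ w) : Prop :=
  ∀ ⦃T : A⦄ (u v : T ⟶ F.obj (op w)),
    (∀ n, u ≫ (cechDescentCone F f).π.app n = v ≫ (cechDescentCone F f).π.app n) → u = v

lemma CechDescent.cechSeparated {F : Cᵒᵖ ⥤ A} {y w : C} {f : y ⟶ w} (h : CechDescent F f) :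
    CechSeparated F f :=
  fun _ _ _ huv => h.some.hom_ext huv

/-- The cosimplicial object `[n] ↦ F(Uₙ(f))`, contravariantly functorial in the arrow `f`. -/
noncomputable def cechCosimplicialObject (F : Cᵒᵖ ⥤ A) : (Arrow C)ᵒᵖ ⥤ CosimplicialObject A :=
  SimplicialObject.cechNerve.op ⋙ (simplicialCosimplicialEquiv C).functor ⋙
    (Functor.whiskeringRight _ _ _).obj F

/-- The legs of `cechDescentCone F f`, as a transformation natural in the arrow `f`. -/
noncomputable def cechAugmentation (F : Cᵒᵖ ⥤ A) :
    (Arrow.rightFunc.op ⋙ F) ⋙ Functor.const SimplexCategory ⟶ cechCosimplicialObject F where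
  app f := (cechDescentCone F f.unop.hom).π
  naturality f g φ := by
    ext n
    refine (F.map_comp _ _).symm.trans (Eq.trans ?_ (F.map_comp _ _))
    exact congr_arg (fun h => F.map (Quiver.Hom.op h)) (WidePullback.lift_base _ _ _ _).symm

theorem CechDescent.of_cone {F : Cᵒᵖ ⥤ A} {J : Type*} [Category J] {D : J ⥤ (Arrow C)ᵒᵖ}
    (κ : Cone D) (hD : ∀ j, CechDescent F (D.obj j).unop.hom)
    (hκ : IsLimit ((Arrow.rightFunc.op ⋙ F).mapCone κ))
    (hmono : ∀ (n : SimplexCategory) ⦃T : A⦄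
      (u v : T ⟶ ((cechCosimplicialObject F).obj κ.pt).obj n),
      (∀ j, u ≫ ((cechCosimplicialObject F).map (κ.π.app j)).app n =
        v ≫ ((cechCosimplicialObject F).map (κ.π.app j)).app n) → u = v) :
    CechDescent F κ.pt.unop.hom := by
  let b : Cone (D ⋙ cechCosimplicialObject F).flip :=
    { pt := D ⋙ Arrow.rightFunc.op ⋙ F
      π :=
        { app := fun n =>
            Functor.whiskerRight (Functor.whiskerLeft D (cechAugmentation F))
              ((evaluation SimplexCategory A).obj n)
          naturality := fun m n g => by
            ext j
            exact ((cechAugmentation F).app (D.obj j)).naturality g } }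
  have hb : IsLimit b := evaluationJointlyReflectsLimits b fun j => (hD j).some
  exact nonempty_isLimit_of_isLimit_flip (a := (cechCosimplicialObject F).mapCone κ) (b := b)
    (c := (cechAugmentation F).app κ.pt) (d := ((Arrow.rightFunc.op ⋙ F).mapCone κ).π)
    (fun j n => (congr_app ((cechAugmentation F).naturality (κ.π.app j)) n).symm) hmono hb hκ

/-- A natural transformation, regarded as a functor to the category of arrows. -/
def arrowFunctor {J D : Type*} [Category J] [Category D] {P Q : J ⥤ D} (θ : P ⟶ Q) :
    J ⥤ Arrow D where
  obj j := Arrow.mk (θ.app j)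
  map g := Arrow.homMk (P.map g) (Q.map g)

/-- For a square `φ : f ⟶ g` of arrows, the induced arrows `Uₙ(f) ⟶ Uₙ(g)` between the levels of
the Čech nerves, augmented by the arrow `φ.right` between the bases. -/
noncomputable def cechLevelCocone {f g : Arrow C} (φ : f ⟶ g) :
    Cocone (arrowFunctor (Arrow.mapCechNerve φ)) where
  pt := Arrow.mk φ.right
  ι :=
    { app := fun _ => Arrow.homMk (WidePullback.base _) (WidePullback.base _)
        (WidePullback.lift_base _ _ _ _).symm
      naturality := fun _ _ _ => Arrow.hom_ext _ _
        ((WidePullback.lift_base _ _ _ _).trans (Category.comp_id _).symm)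
        ((WidePullback.lift_base _ _ _ _).trans (Category.comp_id _).symm) }

section Square

variable {x y z w : C} (p' : x ⟶ y) (p : z ⟶ w) (q' : x ⟶ z) (q : y ⟶ w)
  (comm : p' ≫ q = q' ≫ p)

lemma inducedCechLevelMap_base (n : ℕ) :
    inducedCechLevelMap p' p q' q comm n ≫ WidePullback.base _ = WidePullback.base _ ≫ q :=
  WidePullback.lift_base _ _ _ _

lemma inducedCechLevelMap_π (n : ℕ) (i : Fin (n + 1)) :
    inducedCechLevelMap p' p q' q comm n ≫ WidePullback.π _ i = WidePullback.π _ i ≫ q' :=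
  WidePullback.lift_π _ _ _ _ _

/-- The canonical map from the `(m+1)`-fold fibre product of `Uₙ(p') ⟶ Uₙ(p)` to the `(n+1)`-fold
fibre product of `Uₘ(q') ⟶ Uₘ(q)`, which transposes an `(m+1) × (n+1)` matrix of points of `x`. -/
noncomputable def cechExchange (n m : ℕ) :
    widePullback _ (fun _ : Fin (m + 1) => _)
        (fun _ => inducedCechLevelMap p' p q' q comm n) ⟶
      widePullback _ (fun _ : Fin (n + 1) => _)
        (fun _ => inducedCechLevelMap q' q p' p comm.symm m) :=
  WidePullback.lift
    (inducedCechLevelMap _ q _ _ (inducedCechLevelMap_base p' p q' q comm n) m)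
    (fun i => inducedCechLevelMap _ q' _ _ (inducedCechLevelMap_π p' p q' q comm n i) m)
    (fun i => by
      apply WidePullback.hom_ext
      · intro j
        rw [Category.assoc, inducedCechLevelMap_π, ← Category.assoc, inducedCechLevelMap_π,
          Category.assoc, WidePullback.π_arrow, inducedCechLevelMap_π]
      · rw [Category.assoc, inducedCechLevelMap_base, ← Category.assoc, inducedCechLevelMap_base,
          Category.assoc, WidePullback.π_arrow, inducedCechLevelMap_base])

lemma cechExchange_base (n m : ℕ) :
    cechExchange p' p q' q comm n m ≫ WidePullback.base _ =
      inducedCechLevelMap _ q _ _ (inducedCechLevelMap_base p' p q' q comm n) m :=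
  WidePullback.lift_base _ _ _ _

lemma cechExchange_π (n m : ℕ) (i : Fin (n + 1)) :
    cechExchange p' p q' q comm n m ≫ WidePullback.π _ i =
      inducedCechLevelMap _ q' _ _ (inducedCechLevelMap_π p' p q' q comm n i) m :=
  WidePullback.lift_π _ _ _ _ _

lemma cechExchange_comp_inducedCechLevelMap (n m : ℕ) :
    cechExchange p' p q' q comm n m ≫
        inducedCechLevelMap _ p _ _ (inducedCechLevelMap_base q' q p' p comm.symm m) n =
      WidePullback.base _ := by
  apply WidePullback.hom_ext
  · intro i
    rw [Category.assoc, inducedCechLevelMap_π, ← Category.assoc, cechExchange_π,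
      inducedCechLevelMap_base]
  · rw [Category.assoc, inducedCechLevelMap_base, ← Category.assoc, cechExchange_base,
      inducedCechLevelMap_base]

variable {p' p q' q} in
lemma CechSeparated.hom_ext_of_square {F : Cᵒᵖ ⥤ A} {n : ℕ}
    (hp : CechSeparated F (inducedCechLevelMap p' p q' q comm n)) {T : A}
    {u v : T ⟶ F.obj (op (widePullback w (fun _ : Fin (n + 1) => z) fun _ => p))}
    (huv : ∀ m : ℕ,
      u ≫ F.map (inducedCechLevelMap _ p _ _
          (inducedCechLevelMap_base q' q p' p comm.symm m) n).op =
        v ≫ F.map (inducedCechLevelMap _ p _ _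
          (inducedCechLevelMap_base q' q p' p comm.symm m) n).op) :
    u = v := by
  refine hp u v fun m => ?_
  have leg_eq : (cechDescentCone F (inducedCechLevelMap p' p q' q comm n)).π.app m =
      F.map (inducedCechLevelMap _ p _ _
          (inducedCechLevelMap_base q' q p' p comm.symm m.len) n).op ≫
        F.map (cechExchange p' p q' q comm n m.len).op := by
    rw [← F.map_comp, ← op_comp, cechExchange_comp_inducedCechLevelMap]
    rfl
  rw [leg_eq, ← Category.assoc, huv, Category.assoc]

theorem CechDescent.of_square {F : Cᵒᵖ ⥤ A}
    (hp : ∀ n : ℕ, CechSeparated F (inducedCechLevelMap p' p q' q comm n))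
    (hq : ∀ m : ℕ, CechDescent F (inducedCechLevelMap q' q p' p comm.symm m))
    (h : CechDescent F q) : CechDescent F p := by
  let φ : Arrow.mk q' ⟶ Arrow.mk q := Arrow.homMk p' p comm
  exact CechDescent.of_cone (coneRightOpOfCocone (cechLevelCocone φ)) (fun m => hq m.len) h.some
    fun n _ _ _ huv => (hp n.len).hom_ext_of_square comm fun m => huv (SimplexCategory.mk m)

end Square

theorem cechDescent_iff_of_square_general (F : Cᵒᵖ ⥤ A)
    {x y z w : C} (p' : x ⟶ y) (q' : x ⟶ z) (p : z ⟶ w) (q : y ⟶ w)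
    (comm : p' ≫ q = q' ≫ p)
    (hp : ∀ n : ℕ, CechDescent F (inducedCechLevelMap p' p q' q comm n))
    (hq : ∀ m : ℕ, CechDescent F (inducedCechLevelMap q' q p' p comm.symm m)) :
    CechDescent F p ↔ CechDescent F q :=
  ⟨.of_square q' q p' p comm.symm (fun m => (hq m).cechSeparated) hp,
    .of_square p' p q' q comm (fun n => (hp n).cechSeparated) hq⟩

/-- Given a commutative square `q ∘ p′ = p ∘ q′` in a category with pullbacks
and a presheaf `F` valued in a category with small limits, if `F` satisfies Čech descent for
all the induced morphisms `Uₙ(p′) ⟶ Uₙ(p)` and `Uₘ(q′) ⟶ Uₘ(q)` between iterated fibre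
products, then `F` satisfies Čech descent for `p` if and only if it does for `q`. -/
theorem cechDescent_iff_of_square [HasLimits A] (F : Cᵒᵖ ⥤ A)
    {x y z w : C} (p' : x ⟶ y) (q' : x ⟶ z) (p : z ⟶ w) (q : y ⟶ w)
    (comm : p' ≫ q = q' ≫ p)
    (hp : ∀ n : ℕ, CechDescent F (inducedCechLevelMap p' p q' q comm n))
    (hq : ∀ m : ℕ, CechDescent F (inducedCechLevelMap q' q p' p comm.symm m)) :
    CechDescent F p ↔ CechDescent F q := by
  exact cechDescent_iff_of_square_general F p' q' p q comm hp hq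
end

section
/- Let C be a category with pullbacks, A a category with small limits, F : Cᵒᵖ ⥤ A a presheaf, and let g : z ⟶ y and f : y ⟶ w be composable morphisms in C. Assume that for every morphism h : t ⟶ w, the presheaf F satisfies Čech descent for the base change t ×_w z ⟶ t of f ∘ g along h (in particular, taking h to be the identity of w, for f ∘ g itself). Then F satisfies Čech descent for f. -/
open CategoryTheory CategoryTheory.Limits Opposite

universe v u v' u'

variable {C : Type u} [Category.{v} C] [HasFiniteWidePullbacks C]
variable {A : Type u'} [Category.{v'} A]

/-!
A cone over `[n] ↦ F(Uₙ(f))` is determined by its leg in degree `0`, and the only condition on that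
leg comes from degree `1`. Hence Čech descent for `f` means that `Hom(T, F(-))` is a sheaf for the
presieve `{f}`, for every `T : A`.

Now restrict a descent datum `b` along `f` to `z` and glue it, by descent for `f ∘ g`, to an
element `a` over `w`. The restrictions of `a` and `b` to `z ×_w y` both come from `b`, along two
morphisms to `y` that agree over `w`, so they coincide; since restriction along `z ×_w y ⟶ y` is a
monomorphism, `a` restricts to `b` on `y`.
-/

open scoped Simplicial

section CechNerve

/-- The `i`-th projection `Uₙ(f) ⟶ y` from the degree `n` part of the Čech nerve of `f : y ⟶ w`. -/
noncomputable def cechNerveProj {y w : C} (f : y ⟶ w) (n : SimplexCategory)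
    (i : Fin (n.len + 1)) : (Arrow.mk f).cechNerve.obj (op n) ⟶ y :=
  WidePullback.π (fun _ : Fin (n.len + 1) => f) i

variable {q y w : C} {f : y ⟶ w} {m n : SimplexCategory}

lemma cechNerveProj_comp_eq (i j : Fin (n.len + 1)) :
    cechNerveProj f n i ≫ f = cechNerveProj f n j ≫ f :=
  (WidePullback.π_arrow _ i).trans (WidePullback.π_arrow _ j).symm

lemma cechNerve_map_comp_proj (θ : m ⟶ n) (i : Fin (m.len + 1)) :
    (Arrow.mk f).cechNerve.map θ.op ≫ cechNerveProj f m i =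
      cechNerveProj f n (θ.toOrderHom i) :=
  WidePullback.lift_π _ _ _ _ _

lemma cechNerve_hom_ext {a b : q ⟶ (Arrow.mk f).cechNerve.obj (op n)}
    (h : ∀ i, a ≫ cechNerveProj f n i = b ≫ cechNerveProj f n i) : a = b := by
  refine WidePullback.hom_ext (fun _ : Fin (n.len + 1) => f) a b h ?_
  rw [← WidePullback.π_arrow _ (0 : Fin (n.len + 1)), ← Category.assoc, ← Category.assoc]
  exact congrArg (· ≫ f) (h 0)

/-- The morphism `q ⟶ Uₙ(f)` determined by `n + 1` morphisms `q ⟶ y` which agree after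
composition with `f`. -/
noncomputable def cechNerveLift (u : Fin (n.len + 1) → (q ⟶ y))
    (hu : ∀ i, u i ≫ f = u 0 ≫ f) : q ⟶ (Arrow.mk f).cechNerve.obj (op n) :=
  WidePullback.lift (u 0 ≫ f) u hu

@[simp]
lemma cechNerveLift_comp_proj (u : Fin (n.len + 1) → (q ⟶ y))
    (hu : ∀ i, u i ≫ f = u 0 ≫ f) (i : Fin (n.len + 1)) :
    cechNerveLift u hu ≫ cechNerveProj f n i = u i :=
  WidePullback.lift_π _ _ _ _ _

variable (f) in
/-- The isomorphism `U₀(f) ≅ y`. -/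
noncomputable def cechNerveZeroIso :
    (Arrow.mk f).cechNerve.obj (op ⦋0⦌) ≅ y where
  hom := cechNerveProj f ⦋0⦌ 0
  inv := cechNerveLift (fun _ => 𝟙 y) (fun _ => rfl)
  hom_inv_id := cechNerve_hom_ext fun i => by
    rw [Fin.fin_one_eq_zero i, Category.assoc, cechNerveLift_comp_proj, Category.comp_id,
      Category.id_comp]
  inv_hom_id := cechNerveLift_comp_proj (f := f) _ (fun _ => rfl) 0

lemma cechNerveProj_comp_zeroIso_inv (i : Fin (n.len + 1)) :
    cechNerveProj f n i ≫ (cechNerveZeroIso f).inv =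
      (Arrow.mk f).cechNerve.map (SimplexCategory.const ⦋0⦌ n i).op := by
  rw [Iso.comp_inv_eq]
  exact (cechNerve_map_comp_proj (SimplexCategory.const ⦋0⦌ n i) 0).symm

end CechNerve

section DescentDatum

variable {F : Cᵒᵖ ⥤ A} {y w : C} {f : y ⟶ w}

/-- A generalised element `b : T ⟶ F(y)` is a descent datum along `f : y ⟶ w` if any two
morphisms to `y` which agree after composition with `f` restrict `b` to the same element.
Quantifying over all such pairs avoids choosing a kernel pair of `f`. -/
def IsDescentDatum (F : Cᵒᵖ ⥤ A) {y w : C} (f : y ⟶ w) {T : A} (b : T ⟶ F.obj (op y)) : Prop :=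
  ∀ ⦃q : C⦄ (u v : q ⟶ y), u ≫ f = v ≫ f → b ≫ F.map u.op = b ≫ F.map v.op

/-- The cone over `[n] ↦ F(Uₙ(f))` given by a descent datum `b : T ⟶ F(y)`. Its legs restrict `b`
along the zeroth projections; any other choice of projections gives the same legs. -/
noncomputable def IsDescentDatum.cone {T : A} {b : T ⟶ F.obj (op y)} (hb : IsDescentDatum F f b) :
    Cone ((Arrow.mk f).cechNerve.rightOp ⋙ F) where
  pt := T
  π :=
    { app := fun n => b ≫ F.map (cechNerveProj f n 0).op
      naturality := fun m n θ => by
        change 𝟙 T ≫ b ≫ F.map (cechNerveProj f n 0).op =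
          (b ≫ F.map (cechNerveProj f m 0).op) ≫ F.map ((Arrow.mk f).cechNerve.map θ.op).op
        rw [Category.id_comp, Category.assoc, ← F.map_comp, ← op_comp, cechNerve_map_comp_proj]
        exact hb _ _ (cechNerveProj_comp_eq _ _) }

/-- The element of `F(y)` underlying a cone over `[n] ↦ F(Uₙ(f))`. -/
noncomputable def cechConeElement (s : Cone ((Arrow.mk f).cechNerve.rightOp ⋙ F)) :
    s.pt ⟶ F.obj (op y) :=
  s.π.app ⦋0⦌ ≫ F.map (cechNerveZeroIso f).inv.op

lemma cechConeElement_comp_map_proj (s : Cone ((Arrow.mk f).cechNerve.rightOp ⋙ F))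
    (n : SimplexCategory) (i : Fin (n.len + 1)) :
    cechConeElement s ≫ F.map (cechNerveProj f n i).op = s.π.app n := by
  rw [cechConeElement, Category.assoc, ← F.map_comp, ← op_comp, cechNerveProj_comp_zeroIso_inv]
  exact s.w (SimplexCategory.const ⦋0⦌ n i)

lemma isDescentDatum_cechConeElement (s : Cone ((Arrow.mk f).cechNerve.rightOp ⋙ F)) :
    IsDescentDatum F f (cechConeElement s) := by
  intro q u v huv
  let l : q ⟶ (Arrow.mk f).cechNerve.obj (op ⦋1⦌) :=
    cechNerveLift ![u, v] (Fin.forall_fin_two.2 ⟨rfl, huv.symm⟩)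
  have restrict (i : Fin 2) : cechConeElement s ≫ F.map (![u, v] i).op =
      s.π.app ⦋1⦌ ≫ F.map l.op := by
    rw [← cechConeElement_comp_map_proj s _ i, Category.assoc, ← F.map_comp, ← op_comp,
      cechNerveLift_comp_proj]
  exact (restrict 0).trans (restrict 1).symm

lemma eq_cechConeElement (s : Cone ((Arrow.mk f).cechNerve.rightOp ⋙ F))
    {b : s.pt ⟶ F.obj (op y)}
    (hb : b ≫ F.map (cechNerveZeroIso f).hom.op = s.π.app ⦋0⦌) :
    b = cechConeElement s := by
  rw [cechConeElement, ← hb, Category.assoc, ← F.map_comp, ← op_comp, Iso.inv_hom_id, op_id,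
    F.map_id, Category.comp_id]

lemma IsDescentDatum.cechConeElement_cone {T : A} {b : T ⟶ F.obj (op y)}
    (hb : IsDescentDatum F f b) : cechConeElement hb.cone = b :=
  (eq_cechConeElement hb.cone rfl).symm

lemma comp_cechDescentCone_π_app {T : A} (a : T ⟶ F.obj (op w)) (n : SimplexCategory)
    (i : Fin (n.len + 1)) :
    a ≫ (cechDescentCone F f).π.app n = (a ≫ F.map f.op) ≫ F.map (cechNerveProj f n i).op := by
  rw [Category.assoc, ← F.map_comp, ← op_comp]
  exact congrArg (fun p => a ≫ F.map p.op) (WidePullback.π_arrow _ i).symm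

lemma comp_cechDescentCone_π_app_iff (s : Cone ((Arrow.mk f).cechNerve.rightOp ⋙ F))
    (a : s.pt ⟶ F.obj (op w)) :
    (∀ n, a ≫ (cechDescentCone F f).π.app n = s.π.app n) ↔
      a ≫ F.map f.op = cechConeElement s := by
  refine ⟨fun h => eq_cechConeElement s ?_, fun h n => ?_⟩
  · exact (comp_cechDescentCone_π_app a _ 0).symm.trans (h _)
  · exact (comp_cechDescentCone_π_app a n 0).trans (by rw [h, cechConeElement_comp_map_proj])

end DescentDatum

section CechDescent

variable {F : Cᵒᵖ ⥤ A} {y w : C} {f : y ⟶ w}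

lemma cechDescent_iff_existsUnique :
    CechDescent F f ↔ ∀ ⦃T : A⦄ (b : T ⟶ F.obj (op y)), IsDescentDatum F f b →
      ∃! a : T ⟶ F.obj (op w), a ≫ F.map f.op = b := by
  constructor
  · rintro ⟨hl⟩ T b hb
    have h := (existsUnique_congr (comp_cechDescentCone_π_app_iff hb.cone)).1
      (hl.existsUnique hb.cone)
    rwa [hb.cechConeElement_cone] at h
  · exact fun h => ⟨.ofExistsUnique fun s =>
      (existsUnique_congr (comp_cechDescentCone_π_app_iff s)).2
        (h _ (isDescentDatum_cechConeElement s))⟩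

theorem cechDescent_iff_isSheafFor_singleton :
    CechDescent F f ↔
      ∀ T : A, (Presieve.singleton f).IsSheafFor (F ⋙ coyoneda.obj (op T)) := by
  simp only [cechDescent_iff_existsUnique, Presieve.isSheafFor_singleton]
  rfl

lemma CechDescent.mono_map (h : CechDescent F f) : Mono (F.map f.op) where
  right_cancellation {T} _ _ hab :=
    have separated := (cechDescent_iff_isSheafFor_singleton.1 h T).isSeparatedFor
    Presieve.isSeparatedFor_singleton.1 separated hab

lemma cechDescent_iff_of_iso {x : C} {f' : x ⟶ w} (e : x ≅ y) (he : e.hom ≫ f = f') :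
    CechDescent F f' ↔ CechDescent F f := by
  simp only [cechDescent_iff_isSheafFor_singleton,
    Presieve.isSheafFor_singleton_iff_of_iso f' f e he]

end CechDescent

theorem cechDescent_of_refinement_general (F : Cᵒᵖ ⥤ A) {z y w : C} (g : z ⟶ y) (f : y ⟶ w)
    (hgf : CechDescent F (g ≫ f)) (hmono : Mono (F.map (pullback.snd (g ≫ f) f).op)) :
    CechDescent F f := by
  rw [cechDescent_iff_isSheafFor_singleton] at hgf ⊢
  intro T
  refine Presieve.isSheafFor_of_factorsThru (S := .singleton (g ≫ f)) _ ?_ (hgf T) ?_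
  · rintro _ _ ⟨⟩
    exact ⟨y, g, f, ⟨⟩, rfl⟩
  · rintro _ _ ⟨⟩
    refine ⟨.singleton (pullback.snd (g ≫ f) f), ?_, ?_⟩
    · exact Presieve.isSeparatedFor_singleton.2 fun a b hab => hmono.right_cancellation a b hab
    · rintro _ _ ⟨⟩
      exact ⟨z, pullback.fst (g ≫ f) f, g ≫ f, ⟨⟩, pullback.condition⟩

/-- Let `g : z ⟶ y` and `f : y ⟶ w` be composable morphisms in a category
with pullbacks, and `F` a presheaf valued in a category with small limits.  If `F` satisfies
Čech descent for the base change `t ×_w z ⟶ t` of `f ∘ g` along every morphism `h : t ⟶ w`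
(in particular for `f ∘ g` itself), then `F` satisfies Čech descent for `f`. -/
theorem cechDescent_of_refinement [HasLimits A] (F : Cᵒᵖ ⥤ A)
    {z y w : C} (g : z ⟶ y) (f : y ⟶ w)
    (hdesc : ∀ (t : C) (h : t ⟶ w), CechDescent F (pullback.snd (g ≫ f) h)) :
    CechDescent F f := by
  have hgf : CechDescent F (g ≫ f) :=
    (cechDescent_iff_of_iso (asIso (pullback.fst (g ≫ f) (𝟙 w)))
      (pullback.condition.trans (Category.comp_id _))).1 (hdesc w (𝟙 w))
  exact cechDescent_of_refinement_general F g f hgf (hdesc y f).mono_map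
end
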